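/- Let (V, J_n, L_n) be a Sugawara system with vacuum vector Ω, let α ∈ ℝ with α ≠ 0, and set c := 2(1 + 12α²) (so c > 2). Let ρ be the unitary representation of 𝔎 on V with ρ(k_n) = K^{(α,2)}_n (n ∈ ℤ ∖ {0}) and ρ(C) = c·id. Then ρ(k_n)Ω = (c/32)Ω for all n > 0; there exists μ ∈ ℂ ∖ {0} such that Φ := J_{−1}Ω + μΩ satisfies ρ(k_n)Φ = (c/32 + 1/2)Φ for all n > 0; and ⟨Ω, Φ⟩ ≠ 0, so that the smallest ρ-invariant subspaces of V containing Ω and containing Φ, respectively, are not mutually orthogonal. -/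

import Mathlib

/-!
For `n > 0` the operators `J k` (`0 ≤ k ≤ 2n`), `L 0` and `L (2n)` all kill the vacuum, so
`K^{(α,2)}_n` acts on `Ω` by its scalar part `(1 + 12α²)/16 = c/32`.  On `J₋₁ Ω` the commutation
relations give `J k J₋₁ Ω = δ_{k,1} Ω` and `L m J₋₁ Ω = J_{m-1} Ω`; hence `L 0` contributes the
extra eigenvalue `1/2`, and the `k = 1` term of the sum of currents contributes
`i n α · (1/(2n)) · (-2) Ω = -iα Ω`, independently of `n`.  Thus `K^{(α,2)}_n` preserves the span of
`J₋₁ Ω` and `Ω` with the same triangular matrix for all `n > 0`, and `μ = -2iα` is the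
coefficient that makes `J₋₁ Ω + μ Ω` an eigenvector.  As `J₋₁ Ω ⟂ Ω`, the inner product with `Ω`
is `μ ≠ 0`.
-/

local notation "⟪" x ", " y "⟫" => @inner ℂ _ _ x y

/-- A unitary representation of the Lie algebra `𝔎` (the subalgebra of the
Virasoro algebra spanned by `{k_n = l_0 - l_n : n ∈ ℤ ∖ {0}} ∪ {C}`) on a
complex inner product space `V`, described through the images
`K n` of the basis elements `k n` (with `K 0 = 0`, since `k_0 = 0`) and the
image `Cop` of `C`.  The fields record precisely the bracket relations
`[k_r, k_m] = r k_r - m k_m - (r-m) k_{r+m} + (C/12)(r³-r) δ_{r+m,0}`,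
`[k_r, C] = 0` of `𝔎`, and unitarity with respect to the involution `θ`
determined by `θ(k_n) = k_{-n}`, `θ(C) = C`. -/
structure KRep (V : Type*) [NormedAddCommGroup V] [InnerProductSpace ℂ V] where
  K : ℤ → Module.End ℂ V
  Cop : Module.End ℂ V
  K_zero : K 0 = 0
  comm : ∀ r m : ℤ, ⁅K r, K m⁆ =
    (r : ℂ) • K r - (m : ℂ) • K m - ((r - m : ℤ) : ℂ) • K (r + m) +
      (if r + m = 0 then (((r ^ 3 - r : ℤ) : ℂ) / 12) • Cop else 0)
  commC : ∀ r : ℤ, ⁅K r, Cop⁆ = 0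
  unitary : ∀ (n : ℤ) (u v : V), ⟪K n u, v⟫ = ⟪u, K (-n) v⟫
  unitaryC : ∀ u v : V, ⟪Cop u, v⟫ = ⟪u, Cop v⟫
/-- A Sugawara system on a complex inner product space `V`: a `U(1)` current
`J` together with the associated stress-energy operators `L` (central charge
`1`), satisfying `[J_n, J_m] = n δ_{n+m,0}`, `J_n⁺ = J_{-n}`,
`[L_n, L_m] = (n-m) L_{n+m} + (1/12)(n³-n) δ_{n+m,0}`, `L_n⁺ = L_{-n}`, and
`[L_n, J_m] = -m J_{n+m}`. -/
structure Sugawara (V : Type*) [NormedAddCommGroup V] [InnerProductSpace ℂ V] where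
  J : ℤ → Module.End ℂ V
  L : ℤ → Module.End ℂ V
  commJJ : ∀ n m : ℤ, ⁅J n, J m⁆ =
    (if n + m = 0 then (n : ℂ) • (1 : Module.End ℂ V) else 0)
  unitaryJ : ∀ (n : ℤ) (u v : V), ⟪J n u, v⟫ = ⟪u, J (-n) v⟫
  commLL : ∀ n m : ℤ, ⁅L n, L m⁆ =
    ((n - m : ℤ) : ℂ) • L (n + m) +
      (if n + m = 0 then (((n ^ 3 - n : ℤ) : ℂ) / 12) • (1 : Module.End ℂ V) else 0)
  unitaryL : ∀ (n : ℤ) (u v : V), ⟪L n u, v⟫ = ⟪u, L (-n) v⟫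
  commLJ : ∀ n m : ℤ, ⁅L n, J m⁆ = (-(m : ℂ)) • J (n + m)

variable {V : Type*} [NormedAddCommGroup V] [InnerProductSpace ℂ V]
/-- `K^{(α,2)}_n = (1/2)(L_0 - L_{2n}) + i n α (J_{2n} + (1/(2|n|))(J_0 + J_{2n}
- 2 Σ_{k=min(0,2n)}^{max(0,2n)} J_k)) + ((1 + 12α²)/16)·id`. -/
noncomputable def Kalpha2 (S : Sugawara V) (α : ℝ) (n : ℤ) : Module.End ℂ V :=
  ((1 : ℂ) / 2) • (S.L 0 - S.L (2 * n)) +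
    (Complex.I * (n : ℂ) * (α : ℂ)) •
      (S.J (2 * n) + ((2 * |n| : ℤ) : ℂ)⁻¹ •
        (S.J 0 + S.J (2 * n) -
          (2 : ℂ) • ∑ k ∈ Finset.Icc (min 0 (2 * n)) (max 0 (2 * n)), S.J k)) +
    (((1 + 12 * α ^ 2 : ℝ) : ℂ) / 16) • (1 : Module.End ℂ V)

/-- The smallest subspace of `V` containing `x` and invariant under a
representation `P` of `𝔎`. -/
def minInv (P : KRep V) (x : V) : Submodule ℂ V :=
  sInf {W : Submodule ℂ V | x ∈ W ∧ (∀ n : ℤ, ∀ w ∈ W, P.K n w ∈ W) ∧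
    ∀ w ∈ W, P.Cop w ∈ W}

lemma J_J_neg_one_vacuum (S : Sugawara V) (Ω : V) (hJΩ : ∀ n : ℤ, 0 ≤ n → S.J n Ω = 0)
    (k : ℤ) (hk : 0 ≤ k) : S.J k (S.J (-1) Ω) = if k = 1 then Ω else 0 := by
  have h := congrArg (fun f : Module.End ℂ V => f Ω) (S.commJJ k (-1))
  simp only [Ring.lie_def, LinearMap.sub_apply, Module.End.mul_apply, hJΩ k hk, map_zero,
    sub_zero] at h
  rw [h]
  by_cases h1 : k = 1
  · simp [h1]
  · rw [if_neg (by omega), if_neg h1, LinearMap.zero_apply]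

lemma L_J_neg_one_vacuum (S : Sugawara V) (Ω : V) (hLΩ : ∀ n : ℤ, 0 ≤ n → S.L n Ω = 0)
    (m : ℤ) (hm : 0 ≤ m) : S.L m (S.J (-1) Ω) = S.J (m - 1) Ω := by
  have h := congrArg (fun f : Module.End ℂ V => f Ω) (S.commLJ m (-1))
  simp only [Ring.lie_def, LinearMap.sub_apply, Module.End.mul_apply, hLΩ m hm, map_zero,
    sub_zero] at h
  rw [h]
  simp [sub_eq_add_neg]

lemma Kalpha2_vacuum (S : Sugawara V) (Ω : V)
    (hJΩ : ∀ n : ℤ, 0 ≤ n → S.J n Ω = 0) (hLΩ : ∀ n : ℤ, 0 ≤ n → S.L n Ω = 0)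
    (α : ℝ) (n : ℤ) (hn : 0 < n) :
    Kalpha2 S α n Ω = (((1 + 12 * α ^ 2 : ℝ) : ℂ) / 16) • Ω := by
  have hs : ∑ k ∈ Finset.Icc (min 0 (2 * n)) (max 0 (2 * n)), S.J k Ω = 0 := by
    refine Finset.sum_eq_zero fun k hk => hJΩ k ?_
    rw [Finset.mem_Icc] at hk
    omega
  simp only [Kalpha2, LinearMap.add_apply, LinearMap.sub_apply, LinearMap.smul_apply,
    LinearMap.sum_apply, Module.End.one_apply, hs, hJΩ 0 le_rfl, hJΩ (2 * n) (by omega),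
    hLΩ 0 le_rfl, hLΩ (2 * n) (by omega)]
  simp

/-- The off-diagonal coefficient `-iα` comes from the single nonvanishing current `J 1` in the
sum; the factor `n` in front cancels against `1/(2|n|)`. -/
lemma Kalpha2_J_neg_one_vacuum (S : Sugawara V) (Ω : V)
    (hJΩ : ∀ n : ℤ, 0 ≤ n → S.J n Ω = 0) (hLΩ : ∀ n : ℤ, 0 ≤ n → S.L n Ω = 0)
    (α : ℝ) (n : ℤ) (hn : 0 < n) :
    Kalpha2 S α n (S.J (-1) Ω) =
      (((1 + 12 * α ^ 2 : ℝ) : ℂ) / 16 + 1 / 2) • S.J (-1) Ω - (Complex.I * α) • Ω := by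
  have hs : ∑ k ∈ Finset.Icc (min 0 (2 * n)) (max 0 (2 * n)), S.J k (S.J (-1) Ω) = Ω := by
    have h1 : (1 : ℤ) ∈ Finset.Icc (min 0 (2 * n)) (max 0 (2 * n)) := by
      rw [Finset.mem_Icc]; omega
    rw [Finset.sum_eq_single_of_mem 1 h1]
    · rw [J_J_neg_one_vacuum S Ω hJΩ 1 (by norm_num), if_pos rfl]
    · intro k hk hk1
      rw [Finset.mem_Icc] at hk
      rw [J_J_neg_one_vacuum S Ω hJΩ k (by omega), if_neg hk1]
  have hn' : (n : ℂ) ≠ 0 := by exact_mod_cast hn.ne'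
  simp only [Kalpha2, LinearMap.add_apply, LinearMap.sub_apply, LinearMap.smul_apply,
    LinearMap.sum_apply, Module.End.one_apply, hs, abs_of_pos hn,
    J_J_neg_one_vacuum S Ω hJΩ 0 le_rfl, J_J_neg_one_vacuum S Ω hJΩ (2 * n) (by omega),
    L_J_neg_one_vacuum S Ω hLΩ 0 le_rfl, L_J_neg_one_vacuum S Ω hLΩ (2 * n) (by omega),
    hJΩ (2 * n - 1) (by omega), if_neg (show ¬ (0 : ℤ) = 1 by norm_num),
    if_neg (show ¬ 2 * n = 1 by omega), zero_sub, sub_zero, zero_add, add_zero]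
  push_cast
  match_scalars <;> field_simp
  ring

lemma mem_minInv_self (P : KRep V) (x : V) : x ∈ minInv P x :=
  Submodule.mem_sInf.2 fun _ hW => hW.1

/-- Let `α ≠ 0`, `c = 2(1 + 12α²)`, and let `ρ` be the unitary representation
of `𝔎` with `ρ (k n) = K^{(α,2)}_n` (`n ≠ 0`) and `ρ C = c • 1`, on a Sugawara
system with vacuum vector `Ω`.  Then `ρ (k n) Ω = (c/32) • Ω` for all `n > 0`;
there is `μ ≠ 0` such that `Φ := J₋₁ Ω + μ • Ω` satisfies
`ρ (k n) Φ = (c/32 + 1/2) • Φ` for all `n > 0`; and `⟪Ω, Φ⟫ ≠ 0`, so that the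
smallest `ρ`-invariant subspaces containing `Ω` and `Φ` are not mutually
orthogonal. -/
theorem statement13 (S : Sugawara V) (Ω : V) (hΩ : ‖Ω‖ = 1)
    (hJΩ : ∀ n : ℤ, 0 ≤ n → S.J n Ω = 0) (hLΩ : ∀ n : ℤ, 0 ≤ n → S.L n Ω = 0)
    (α : ℝ) (hα : α ≠ 0) (c : ℝ) (hc : c = 2 * (1 + 12 * α ^ 2))
    (ρ : KRep V) (hρ : ∀ n : ℤ, n ≠ 0 → ρ.K n = Kalpha2 S α n)
    (hρC : ρ.Cop = (c : ℂ) • (1 : Module.End ℂ V)) :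
    (∀ n : ℤ, 0 < n → ρ.K n Ω = ((c / 32 : ℝ) : ℂ) • Ω) ∧
    ∃ μ : ℂ, μ ≠ 0 ∧
      (∀ n : ℤ, 0 < n →
        ρ.K n (S.J (-1) Ω + μ • Ω) =
          ((c / 32 + 1 / 2 : ℝ) : ℂ) • (S.J (-1) Ω + μ • Ω)) ∧
      (⟪Ω, S.J (-1) Ω + μ • Ω⟫ : ℂ) ≠ 0 ∧
      ¬ (∀ u ∈ minInv ρ Ω, ∀ v ∈ minInv ρ (S.J (-1) Ω + μ • Ω),
          (⟪u, v⟫ : ℂ) = 0) := by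
  have hΦ : ⟪Ω, S.J (-1) Ω + (-2 * Complex.I * α) • Ω⟫ = -2 * Complex.I * α := by
    have h := S.unitaryJ 1 Ω Ω
    rw [hJΩ 1 (by norm_num), inner_zero_left] at h
    rw [inner_add_right, ← h, inner_smul_right, inner_self_eq_norm_sq_to_K, hΩ]
    simp
  have hμ : -2 * Complex.I * (α : ℂ) ≠ 0 := by simp [hα]
  refine ⟨fun n hn => ?_, -2 * Complex.I * α, hμ, fun n hn => ?_, by rwa [hΦ], fun h => ?_⟩
  · rw [hρ n hn.ne', Kalpha2_vacuum S Ω hJΩ hLΩ α n hn, hc]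
    congr 1
    push_cast
    ring
  · rw [hρ n hn.ne', map_add, map_smul, Kalpha2_vacuum S Ω hJΩ hLΩ α n hn,
      Kalpha2_J_neg_one_vacuum S Ω hJΩ hLΩ α n hn, hc]
    push_cast
    match_scalars <;> ring
  · exact hμ (hΦ ▸ h Ω (mem_minInv_self ρ Ω) _ (mem_minInv_self ρ _))
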